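/- Let A_e ∈ ℝ^{q×q}, B_e ∈ ℝ^{q×m}, and let T_z ∈ ℝ^{q×q} be orthogonal such that T_z·A_e·T_z^⊤ = [[A_a, A_ab], [0, A_b]] and T_z·B_e = [B_a; 0], with A_a ∈ ℝ^{l×l}, A_b ∈ ℝ^{(q−l)×(q−l)} Hurwitz, and B_a ∈ ℝ^{l×m}. Let Z_a ∈ ℝ^{l×N}, U ∈ ℝ^{m×N}, set Ż_a := A_a·Z_a + B_a·U, and suppose Q ∈ ℝ^{N×l} satisfies: Z_a·Q is symmetric and positive definite, and Ż_a·Q + (Ż_a·Q)^⊤ is negative definite. Then the gain K_e := [U·Q·(Z_a·Q)^{−1}, 0_{m×(q−l)}]·T_z ∈ ℝ^{m×q} is such that A_e + B_e·K_e is Hurwitz. -/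

import Mathlib

open Matrix Filter
open scoped Kronecker

/-- Column-stacking vectorization `vec X : (col, row) ↦ X row col`
(`vec X` stacks the columns of `X` one below another). -/
def mvec {l : ℕ} {K : Type*} (X : Matrix (Fin l) K ℝ) : K × Fin l → ℝ :=
  fun q => X q.2 q.1

/-- The Kronecker product `θᵀ ⊗ S` of a row vector `θᵀ` with a square matrix `S`,
with the trivial row index of `θᵀ` flattened away. -/
def rowKron {n : ℕ} {K : Type*} (θ : K → ℝ) (S : Matrix (Fin n) (Fin n) ℝ) :
    Matrix (Fin n) (K × Fin n) ℝ :=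
  ((Matrix.of fun (_ : Fin 1) j => θ j) ⊗ₖ S).submatrix (fun i => ((0 : Fin 1), i)) id

/-- Column index set of the Kreisselmeier filter state `M ∈ ℝ^{n × (p+m)n}`. -/
abbrev Kix (n m p : ℕ) := (Fin p × Fin n) ⊕ (Fin m × Fin n)

/-- The regressor `[yᵀ ⊗ Iₙ , uᵀ ⊗ Iₙ] ∈ ℝ^{n × (p+m)n}` (horizontal concatenation). -/
def regressor {m p : ℕ} (n : ℕ) (y : Fin p → ℝ) (u : Fin m → ℝ) :
    Matrix (Fin n) (Kix n m p) ℝ :=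
  Matrix.fromCols (rowKron y (1 : Matrix (Fin n) (Fin n) ℝ))
    (rowKron u (1 : Matrix (Fin n) (Fin n) ℝ))

/-- A real square matrix is Hurwitz if all of its eigenvalues over `ℂ`
have strictly negative real part. -/
def IsHurwitz {N : Type*} [Fintype N] [DecidableEq N] (A : Matrix N N ℝ) : Prop :=
  ∀ z ∈ spectrum ℂ (A.map (Complex.ofReal : ℝ → ℂ)), z.re < 0

/-- PBH test for stabilizability: for every `λ ∈ ℂ` with `Re λ ≥ 0`,
`rank [λ·I − A₀ , B₀] = q` over `ℂ`. -/
def IsStabilizable {q m : Type*} [Fintype q] [DecidableEq q] [Fintype m]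
    (A₀ : Matrix q q ℝ) (B₀ : Matrix q m ℝ) : Prop :=
  ∀ z : ℂ, 0 ≤ z.re →
    (Matrix.fromCols (z • (1 : Matrix q q ℂ) - A₀.map (Complex.ofReal : ℝ → ℂ))
      (B₀.map (Complex.ofReal : ℝ → ℂ))).rank = Fintype.card q

/-- Euclidean norm of a vector. -/
noncomputable def euclNorm {ι : Type*} [Fintype ι] (v : ι → ℝ) : ℝ :=
  Real.sqrt (∑ i, v i ^ 2)

/-- Frobenius norm of a matrix. -/
noncomputable def frobNorm {ι K : Type*} [Fintype ι] [Fintype K] (X : Matrix ι K ℝ) : ℝ :=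
  Real.sqrt (∑ i, ∑ j, X i j ^ 2)

/-- `F_ξ := I_μ ⊗ F`. -/
def Fxi {n m p : ℕ} (F : Matrix (Fin n) (Fin n) ℝ) :
    Matrix (Kix n m p × Fin n) (Kix n m p × Fin n) ℝ :=
  (1 : Matrix (Kix n m p) (Kix n m p) ℝ) ⊗ₖ F

/-- `B_ξ := [0_{pn²×m} ; I_m ⊗ vec(I_n)]` (vertical concatenation), written entrywise
on the flattened row index `Kix n m p × Fin n`. -/
def Bxi (n m p : ℕ) : Matrix (Kix n m p × Fin n) (Fin m) ℝ :=
  Matrix.of fun q j =>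
    Sum.elim (fun _ => (0 : ℝ))
      (fun ja => (1 : Matrix (Fin m) (Fin m) ℝ) ja.1 j *
        (1 : Matrix (Fin n) (Fin n) ℝ) ja.2 q.2) q.1

/-- `L_ξ := [I_p ⊗ vec(I_n) ; 0_{mn²×p}]` (vertical concatenation), written entrywise
on the flattened row index `Kix n m p × Fin n`. -/
def Lxi (n m p : ℕ) : Matrix (Kix n m p × Fin n) (Fin p) ℝ :=
  Matrix.of fun q j =>
    Sum.elim (fun ya => (1 : Matrix (Fin p) (Fin p) ℝ) ya.1 j *
        (1 : Matrix (Fin n) (Fin n) ℝ) ya.2 q.2) (fun _ => (0 : ℝ)) q.1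

/-!
In the coordinates given by `T` the closed loop is block upper triangular with diagonal blocks
`A_a + B_a K` and `A_b`, where `K = U Q (Z_a Q)⁻¹`, so only the first block has to be shown Hurwitz.
Since `(A_a + B_a K) (Z_a Q) = Ż_a Q`, the two matrix inequalities say that `Z_a Q` is a Lyapunov
matrix `P` for `M = A_a + B_a K`: if `v M = z v` with `v ≠ 0`, then
`v (M P + P Mᴴ) vᴴ = 2 Re z · v P vᴴ`, where the left side is negative and `v P vᴴ ≥ 0`.
-/

section Charpoly

variable {R : Type*} [CommRing R] {n o : Type*} [Fintype n] [DecidableEq n]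
  [Fintype o] [DecidableEq o]

theorem charpoly_conj_of_mul_eq_one {T : Matrix o n R} {S : Matrix n o R}
    (hTS : T * S = 1) (hST : S * T = 1) (A : Matrix n n R) :
    (T * A * S).charpoly = A.charpoly := by
  nontriviality R
  have hcard : Fintype.card n = Fintype.card o := square_of_invertible S T hST hTS
  rw [Matrix.mul_assoc, charpoly_mul_comm_of_le _ _ hcard.le, Matrix.mul_assoc, hST, hcard,
    Nat.sub_self, pow_zero, one_mul, Matrix.mul_one]

end Charpoly

section Eigenvector

variable {K : Type*} [Field K] {n : Type*} [Fintype n] [DecidableEq n]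

theorem exists_vecMul_eq_smul_of_mem_spectrum {M : Matrix n n K} {z : K}
    (hz : z ∈ spectrum K M) : ∃ w ≠ 0, w ᵥ* M = z • w := by
  rw [spectrum.mem_iff, Matrix.isUnit_iff_isUnit_det, isUnit_iff_ne_zero, not_not,
    Algebra.algebraMap_eq_smul_one, ← exists_vecMul_eq_zero_iff] at hz
  obtain ⟨w, hw, hwM⟩ := hz
  rw [vecMul_sub, vecMul_smul, vecMul_one, sub_eq_zero] at hwM
  exact ⟨w, hw, hwM.symm⟩

end Eigenvector

section Lyapunov

variable {𝕜 : Type*} [RCLike 𝕜] {n : Type*}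

open scoped MatrixOrder ComplexOrder

theorem posSemidef_map_algebraMap [Finite n] {P : Matrix n n ℝ} (hP : P.PosSemidef) :
    (P.map (algebraMap ℝ 𝕜)).PosSemidef := by
  classical
  cases nonempty_fintype n
  obtain ⟨B, rfl⟩ := CStarAlgebra.nonneg_iff_eq_star_mul_self.mp hP.nonneg
  rw [star_eq_conjTranspose, Matrix.map_mul, conjTranspose_map _ fun r => by simp]
  exact posSemidef_conjTranspose_mul_self _

theorem posDef_map_algebraMap [Finite n] {P : Matrix n n ℝ} (hP : P.PosDef) :
    (P.map (algebraMap ℝ 𝕜)).PosDef := by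
  classical
  cases nonempty_fintype n
  exact (posSemidef_map_algebraMap hP.posSemidef).posDef_iff_isUnit.mpr
    (hP.isUnit.map (algebraMap ℝ 𝕜).mapMatrix)

variable [Fintype n]

theorem dotProduct_mulVec_lyapunov {M P : Matrix n n 𝕜} (hP : P.IsHermitian) {v : n → 𝕜} {z : 𝕜}
    (hv : star v ᵥ* M = z • star v) :
    star v ⬝ᵥ (M * P + (M * P)ᴴ) *ᵥ v = (2 * RCLike.re z : ℝ) * (star v ⬝ᵥ P *ᵥ v) := by
  have hMv : Mᴴ *ᵥ v = star z • v := by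
    rw [← star_star (Mᴴ *ᵥ v), star_mulVec, conjTranspose_conjTranspose, hv, star_smul, star_star]
  rw [conjTranspose_mul, hP.eq, add_mulVec, ← mulVec_mulVec, ← mulVec_mulVec, hMv, mulVec_smul,
    dotProduct_add, dotProduct_mulVec, hv, smul_dotProduct, dotProduct_smul, smul_eq_mul,
    smul_eq_mul, ← add_mul, RCLike.star_def, RCLike.add_conj]
  norm_cast

theorem re_lt_zero_of_mem_spectrum_of_lyapunov [DecidableEq n] {M P : Matrix n n 𝕜}
    (hP : P.PosSemidef) (hM : (-(M * P + (M * P)ᴴ)).PosDef) {z : 𝕜} (hz : z ∈ spectrum 𝕜 M) :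
    RCLike.re z < 0 := by
  obtain ⟨w, hw, hwM⟩ := exists_vecMul_eq_smul_of_mem_spectrum hz
  obtain ⟨v, rfl⟩ := (star_involutive (R := n → 𝕜)).surjective w
  rw [star_ne_zero] at hw
  have hPv : 0 ≤ RCLike.re (star v ⬝ᵥ P *ᵥ v) := hP.re_dotProduct_nonneg v
  have hMv : 0 < RCLike.re (star v ⬝ᵥ (-(M * P + (M * P)ᴴ)) *ᵥ v) := hM.re_dotProduct_pos hw
  rw [neg_mulVec, dotProduct_neg, map_neg, dotProduct_mulVec_lyapunov hP.isHermitian hwM,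
    RCLike.re_ofReal_mul] at hMv
  by_contra! hre
  linarith [mul_nonneg hre hPv]

end Lyapunov

section Hurwitz

variable {n o : Type*} [Fintype n] [DecidableEq n] [Fintype o] [DecidableEq o]

theorem isHurwitz_iff_aeval_charpoly {A : Matrix n n ℝ} :
    IsHurwitz A ↔ ∀ z : ℂ, Polynomial.aeval z A.charpoly = 0 → z.re < 0 := by
  refine forall_congr' fun z => ?_
  rw [← Complex.coe_algebraMap, mem_spectrum_iff_isRoot_charpoly, charpoly_map,
    Polynomial.IsRoot.def, Polynomial.eval_map_algebraMap]

theorem isHurwitz_conj_iff_of_mul_eq_one {T : Matrix o n ℝ} {S : Matrix n o ℝ}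
    (hTS : T * S = 1) (hST : S * T = 1) {A : Matrix n n ℝ} :
    IsHurwitz (T * A * S) ↔ IsHurwitz A := by
  rw [isHurwitz_iff_aeval_charpoly, isHurwitz_iff_aeval_charpoly,
    charpoly_conj_of_mul_eq_one hTS hST]

theorem isHurwitz_fromBlocks_zero₂₁ {A : Matrix n n ℝ} {B : Matrix n o ℝ} {D : Matrix o o ℝ} :
    IsHurwitz (fromBlocks A B 0 D) ↔ IsHurwitz A ∧ IsHurwitz D := by
  simp only [isHurwitz_iff_aeval_charpoly, charpoly_fromBlocks_zero₂₁, map_mul, mul_eq_zero,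
    or_imp, forall_and]

theorem isHurwitz_of_lyapunov {M P : Matrix n n ℝ} (hP : P.PosSemidef)
    (hM : (-(M * P + (M * P)ᵀ)).PosDef) : IsHurwitz M := by
  intro z hz
  refine re_lt_zero_of_mem_spectrum_of_lyapunov (posSemidef_map_algebraMap hP) ?_ hz
  convert posDef_map_algebraMap (𝕜 := ℂ) hM using 1
  ext i j
  simp [Matrix.mul_apply]

end Hurwitz

section Feedback

variable {R : Type*} [Semiring R] {n l b m : Type*} [Fintype n] [Fintype l] [Fintype b]
  [DecidableEq l] [DecidableEq b] [Fintype m]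

theorem conj_add_mul_fromCols_mul {A : Matrix n n R} {B : Matrix n m R}
    {T : Matrix (l ⊕ b) n R} {S : Matrix n (l ⊕ b) R} (hTS : T * S = 1)
    {Aa : Matrix l l R} {Aab : Matrix l b R} {Ab : Matrix b b R}
    (hA : T * A * S = fromBlocks Aa Aab 0 Ab)
    {Ba : Matrix l m R} (hB : T * B = fromRows Ba 0) (Ka : Matrix m l R) (Kb : Matrix m b R) :
    T * (A + B * (fromCols Ka Kb * T)) * S =
      fromBlocks (Aa + Ba * Ka) (Aab + Ba * Kb) 0 Ab :=
  calc T * (A + B * (fromCols Ka Kb * T)) * S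
    _ = T * A * S + T * B * fromCols Ka Kb * (T * S) := by
      simp only [Matrix.mul_add, Matrix.add_mul, Matrix.mul_assoc]
    _ = fromBlocks (Aa + Ba * Ka) (Aab + Ba * Kb) 0 Ab := by
      rw [hA, hB, hTS, Matrix.mul_one, fromRows_mul_fromCols, fromBlocks_add, Matrix.zero_mul,
        Matrix.zero_mul, add_zero, add_zero]

end Feedback

section DataDriven

variable {n l b m N : Type*} [Fintype n] [DecidableEq n] [Fintype l] [DecidableEq l]
  [Fintype b] [DecidableEq b] [Fintype m] [Fintype N]

theorem isHurwitz_add_mul_of_data_lmi {A : Matrix l l ℝ} {B : Matrix l m ℝ} {Z : Matrix l N ℝ}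
    {U : Matrix m N ℝ} {Q : Matrix N l ℝ} (hpos : (Z * Q).PosDef)
    (hneg : (-((A * Z + B * U) * Q + ((A * Z + B * U) * Q)ᵀ)).PosDef) :
    IsHurwitz (A + B * (U * Q * (Z * Q)⁻¹)) := by
  have hdet : IsUnit (Z * Q).det := (isUnit_iff_isUnit_det _).mp hpos.isUnit
  have hclosed : (A + B * (U * Q * (Z * Q)⁻¹)) * (Z * Q) = (A * Z + B * U) * Q := by
    rw [Matrix.add_mul, Matrix.mul_assoc B, nonsing_inv_mul_cancel_right _ _ hdet, Matrix.add_mul,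
      Matrix.mul_assoc A, Matrix.mul_assoc B]
  exact isHurwitz_of_lyapunov hpos.posSemidef (hclosed ▸ hneg)

theorem stmt17_general {Ae : Matrix n n ℝ} {Be : Matrix n m ℝ}
    {T : Matrix (l ⊕ b) n ℝ} {S : Matrix n (l ⊕ b) ℝ} (hTS : T * S = 1) (hST : S * T = 1)
    {Aa : Matrix l l ℝ} {Aab : Matrix l b ℝ} {Ab : Matrix b b ℝ} (hAb : IsHurwitz Ab)
    (hAdec : T * Ae * S = fromBlocks Aa Aab 0 Ab)
    {Ba : Matrix l m ℝ} (hBdec : T * Be = fromRows Ba 0)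
    {Za : Matrix l N ℝ} {U : Matrix m N ℝ} {Zdot : Matrix l N ℝ} (hZdot : Zdot = Aa * Za + Ba * U)
    {Q : Matrix N l ℝ} (hpos : (Za * Q).PosDef) (hneg : (-(Zdot * Q + (Zdot * Q)ᵀ)).PosDef)
    {Ke : Matrix m n ℝ} {Kb : Matrix m b ℝ} (hKe : Ke = fromCols (U * Q * (Za * Q)⁻¹) Kb * T) :
    IsHurwitz (Ae + Be * Ke) := by
  subst hZdot hKe
  rw [← isHurwitz_conj_iff_of_mul_eq_one hTS hST, conj_add_mul_fromCols_mul hTS hAdec hBdec,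
    isHurwitz_fromBlocks_zero₂₁]
  exact ⟨isHurwitz_add_mul_of_data_lmi hpos hneg, hAb⟩

end DataDriven

/-- main theorem of the paper: the gain computed from the
data-based LMI in the reduced coordinates stabilizes the extended system.
If `T_z` is orthogonal with `T_z·A_e·T_zᵀ = [[A_a, A_ab], [0, A_b]]`,
`T_z·B_e = [B_a; 0]`, `A_b` Hurwitz, and `Q` satisfies the LMI
`Z_a·Q = (Z_a·Q)ᵀ ≻ 0`, `Ż_a·Q + (Ż_a·Q)ᵀ ≺ 0` with `Ż_a := A_a·Z_a + B_a·U`,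
then `K_e := [U·Q·(Z_a·Q)⁻¹, 0]·T_z` makes `A_e + B_e·K_e` Hurwitz. -/
theorem stmt17 {q l m N : ℕ}
    (Ae : Matrix (Fin q) (Fin q) ℝ) (Be : Matrix (Fin q) (Fin m) ℝ)
    (Tz : Matrix (Fin l ⊕ Fin (q - l)) (Fin q) ℝ)
    (hTz1 : Tz * Tzᵀ = 1) (hTz2 : Tzᵀ * Tz = 1)
    (Aa : Matrix (Fin l) (Fin l) ℝ) (Aab : Matrix (Fin l) (Fin (q - l)) ℝ)
    (Ab : Matrix (Fin (q - l)) (Fin (q - l)) ℝ) (hAb : IsHurwitz Ab)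
    (hAdec : Tz * Ae * Tzᵀ = Matrix.fromBlocks Aa Aab 0 Ab)
    (Ba : Matrix (Fin l) (Fin m) ℝ)
    (hBdec : Tz * Be = Matrix.fromRows Ba (0 : Matrix (Fin (q - l)) (Fin m) ℝ))
    (Za : Matrix (Fin l) (Fin N) ℝ) (U : Matrix (Fin m) (Fin N) ℝ)
    (Zdot : Matrix (Fin l) (Fin N) ℝ) (hZdot : Zdot = Aa * Za + Ba * U)
    (Q : Matrix (Fin N) (Fin l) ℝ)
    (hpos : (Za * Q).PosDef)
    (hneg : (-(Zdot * Q + (Zdot * Q)ᵀ)).PosDef)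
    (Ke : Matrix (Fin m) (Fin q) ℝ)
    (hKe : Ke = Matrix.fromCols (U * Q * (Za * Q)⁻¹)
      (0 : Matrix (Fin m) (Fin (q - l)) ℝ) * Tz) :
    IsHurwitz (Ae + Be * Ke) :=
  stmt17_general hTz1 hTz2 hAb hAdec hBdec hZdot hpos hneg hKe
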